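/- arXiv:2511.01067 — 3 statements merged into one kernel-verified Lean document; each statement's English description precedes it below -/
import Mathlib

section
/- Let α : ℝ → ℝ be continuous and strictly increasing with α(0) = 0 (an extended class-K function). Let h : ℝ → ℝ be differentiable and satisfy h(0) ≥ 0 and h'(t) ≥ −α(h(t)) for all t ≥ 0. Then h(t) ≥ 0 for all t ≥ 0. -/
/-- Scalar comparison lemma behind forward invariance. If `α : ℝ → ℝ` is a
continuous, strictly increasing extended class-K function (`α 0 = 0`), `h : ℝ → ℝ` is
differentiable with `h 0 ≥ 0` and `h' t ≥ −α (h t)` for all `t ≥ 0`, then `h t ≥ 0` for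
all `t ≥ 0`. -/
theorem barrier_comparison_nonneg
    (α : ℝ → ℝ) (hαc : Continuous α) (hαm : StrictMono α) (hα0 : α 0 = 0)
    (h : ℝ → ℝ) (hdiff : Differentiable ℝ h) (hinit : 0 ≤ h 0)
    (hineq : ∀ t ≥ (0 : ℝ), -α (h t) ≤ deriv h t) :
    ∀ t ≥ (0 : ℝ), 0 ≤ h t := by
  intro t ht
  by_contra hneg
  push Not at hneg
  have key := image_le_of_deriv_right_lt_deriv_boundary (f := fun x => -h x)
    (f' := fun x => -deriv h x) (a := 0) (b := t)
    (B := fun _ => -h t / 2) (B' := fun _ => 0)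
    hdiff.continuous.neg.continuousOn
    (fun x _ => (hdiff x).hasDerivAt.neg.hasDerivWithinAt)
    (by show -h 0 ≤ -h t / 2; linarith)
    (fun x => hasDerivAt_const x _)
    (fun x hx hxe => by
      have h1 : h x < 0 := by
        have h2 : -h x = -h t / 2 := hxe
        linarith
      have h3 := hαm h1
      have h4 := hineq x hx.1
      show -deriv h x < 0
      linarith)
  have h5 : -h t ≤ -h t / 2 := key (Set.right_mem_Icc.mpr ht)
  linarith
end

section
/- Let m ≥ 1 and let α_0, …, α_{m−1} : ℝ → ℝ each be continuous and strictly increasing with α_i(0) = 0 (extended class-K functions). Let ψ_0, …, ψ_m : ℝ → ℝ be such that ψ_0, …, ψ_{m−1} are differentiable and ψ_i(t) = ψ_{i−1}'(t) + α_{i−1}(ψ_{i−1}(t)) for all t and each i = 1, …, m. If ψ_m(t) ≥ 0 for all t ≥ 0 and ψ_i(0) ≥ 0 for each i = 0, …, m−1, then ψ_i(t) ≥ 0 for all t ≥ 0 and every i = 0, …, m. In particular, the trajectory remains in the intersection of the zero-superlevel sets of ψ_0, …, ψ_m. -/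
theorem ubf_step (a f : ℝ → ℝ) (ha : StrictMono a) (ha0 : a 0 = 0)
    (hf : Differentiable ℝ f) (h : ∀ t ≥ (0 : ℝ), 0 ≤ deriv f t + a (f t)) (h0 : 0 ≤ f 0) :
    ∀ t ≥ (0 : ℝ), 0 ≤ f t := by
  intro t ht
  refine le_of_forall_pos_le_add fun ε hε => ?_
  have key := image_le_of_deriv_right_lt_deriv_boundary (f := fun x => - f x)
    (f' := fun x => - deriv f x) (a := 0) (b := t) (B := fun _ => ε) (B' := fun _ => 0)
    hf.continuous.neg.continuousOn
    (fun x _ => (hf x).hasDerivAt.neg.hasDerivWithinAt)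
    (by linarith) (fun x => hasDerivAt_const x ε)
    (by
      intro x hx hxe
      have h1 := h x hx.1
      have h2 : a (f x) < a 0 := ha (by linarith)
      linarith) (Set.right_mem_Icc.2 ht)
  linarith

/-- High Order UBF chain. Given extended class-K functions `α₀, …, α_{m−1}`
and functions `ψ₀, …, ψ_m : ℝ → ℝ` with `ψ₀, …, ψ_{m−1}` differentiable and
`ψ_{i+1} t = ψ_i' t + α_i (ψ_i t)`, if `ψ_m t ≥ 0` for all `t ≥ 0` and `ψ_i 0 ≥ 0` for
all `i < m`, then `ψ_i t ≥ 0` for all `t ≥ 0` and all `i ≤ m`; that is, the trajectory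
remains in the intersection of the zero-superlevel sets of `ψ₀, …, ψ_m`. -/
theorem high_order_ubf_chain_forward_invariance
    (m : ℕ) (hm : 1 ≤ m) (α : ℕ → ℝ → ℝ)
    (hαc : ∀ i < m, Continuous (α i)) (hαm : ∀ i < m, StrictMono (α i))
    (hα0 : ∀ i < m, α i 0 = 0)
    (ψ : ℕ → ℝ → ℝ) (hdiff : ∀ i < m, Differentiable ℝ (ψ i))
    (hrec : ∀ i < m, ∀ t : ℝ, ψ (i + 1) t = deriv (ψ i) t + α i (ψ i t))
    (htop : ∀ t ≥ (0 : ℝ), 0 ≤ ψ m t) (hinit : ∀ i < m, 0 ≤ ψ i 0) :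
    ∀ i ≤ m, ∀ t ≥ (0 : ℝ), 0 ≤ ψ i t := by
  intro i hi
  induction hi using Nat.decreasingInduction with
  | self => exact htop
  | of_succ k hk ih =>
    exact ubf_step (α k) (ψ k) (hαm k hk) (hα0 k hk) (hdiff k hk)
      (fun t ht => hrec k hk t ▸ ih t ht) (hinit k hk)
end

section
/- For (x_1, x_2) ∈ ℝ² with 0 < x_1 < 1 and 0 ≤ x_2 ≤ x_1²/2, consider the quadratic program minimizing (1/2)·uᵀu over u = (u_1, u_2, u_3, u_4) ∈ ℝ⁴ subject to the four linear constraints −u_2 + u_3 ≥ 1, u_2 + u_3 ≥ 1, −u_1 + u_3 ≥ 1, and u_1 + u_3 + x_1·u_4 ≥ 1 + x_2. Then the vector u(x) = (0, 0, 1, x_2/x_1) is feasible and is the unique minimizer of this quadratic program. -/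
/-- The feasible set of Robinson's parametric quadratic program: the four linear
constraints `−u₂ + u₃ ≥ 1`, `u₂ + u₃ ≥ 1`, `−u₁ + u₃ ≥ 1`, `u₁ + u₃ + x₁·u₄ ≥ 1 + x₂`
(indices 0-based in Lean). -/
def RobinsonFeasible (x₁ x₂ : ℝ) (u : Fin 4 → ℝ) : Prop :=
  1 ≤ -u 1 + u 2 ∧ 1 ≤ u 1 + u 2 ∧ 1 ≤ -u 0 + u 2 ∧ 1 + x₂ ≤ u 0 + u 2 + x₁ * u 3

/-- On the domain `0 < x₁ < 1`, `0 ≤ x₂ ≤ x₁²/2`, the vector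
`u(x) = (0, 0, 1, x₂/x₁)` is feasible for Robinson's quadratic program and is its unique
minimizer for the objective `(1/2)·uᵀu`. -/
theorem robinson_qp_unique_minimizer
    (x₁ x₂ : ℝ) (h₁ : 0 < x₁) (h₁' : x₁ < 1) (h₂ : 0 ≤ x₂) (h₂' : x₂ ≤ x₁ ^ 2 / 2) :
    RobinsonFeasible x₁ x₂ ![0, 0, 1, x₂ / x₁] ∧
    ∀ v : Fin 4 → ℝ, RobinsonFeasible x₁ x₂ v → v ≠ ![0, 0, 1, x₂ / x₁] →
      (1 / 2) * ∑ i, (![0, 0, 1, x₂ / x₁] : Fin 4 → ℝ) i ^ 2 <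
        (1 / 2) * ∑ i, v i ^ 2 := by
  obtain ⟨l, hl⟩ : ∃ l, l = x₂ / x₁ ^ 2 := ⟨_, rfl⟩
  have hx : x₂ = l * x₁ ^ 2 := by rw [hl]; field_simp
  have hl0 : 0 ≤ l := by rw [hl]; positivity
  have hl1 : l ≤ 1 / 2 := by
    rw [hl, div_le_iff₀ (by positivity)]; linarith
  have ht : x₂ / x₁ = l * x₁ := by rw [hx]; field_simp
  rw [ht]
  refine ⟨?_, ?_⟩
  · simp only [RobinsonFeasible]
    simp
    rw [hx]
    apply le_of_eq
    ring
  · rintro v ⟨c1, c2, c3, c4⟩ hne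
    have hpos : 0 < v 0 ^ 2 + v 1 ^ 2 + (v 2 - 1) ^ 2 + (v 3 - l * x₁) ^ 2 := by
      by_contra hcon
      apply hne
      have e0 : v 0 = 0 := by
        apply pow_eq_zero_iff (two_ne_zero) |>.mp
        nlinarith [sq_nonneg (v 0), sq_nonneg (v 1), sq_nonneg (v 2 - 1), sq_nonneg (v 3 - l * x₁)]
      have e1 : v 1 = 0 := by
        apply pow_eq_zero_iff (two_ne_zero) |>.mp
        nlinarith [sq_nonneg (v 0), sq_nonneg (v 1), sq_nonneg (v 2 - 1), sq_nonneg (v 3 - l * x₁)]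
      have e2 : v 2 - 1 = 0 := by
        apply pow_eq_zero_iff (two_ne_zero) |>.mp
        nlinarith [sq_nonneg (v 0), sq_nonneg (v 1), sq_nonneg (v 2 - 1), sq_nonneg (v 3 - l * x₁)]
      have e3 : v 3 - l * x₁ = 0 := by
        apply pow_eq_zero_iff (two_ne_zero) |>.mp
        nlinarith [sq_nonneg (v 0), sq_nonneg (v 1), sq_nonneg (v 2 - 1), sq_nonneg (v 3 - l * x₁)]
      ext i
      fin_cases i
      · simpa using e0
      · simpa using e1
      · simpa using sub_eq_zero.mp e2
      · simpa using sub_eq_zero.mp e3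
    have k1 : 0 ≤ (1 - 2 * l) * (v 2 - 1) := mul_nonneg (by linarith) (by linarith)
    have k2 : 0 ≤ l * (2 * (v 2 - 1) + x₁ * v 3 - l * x₁ ^ 2) :=
      mul_nonneg hl0 (by linarith)
    simp only [Fin.sum_univ_four]
    simp
    nlinarith [k1, k2, hpos]
end
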